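/- Let V be a finite set with distinct s, t ∈ V, and let c_λ : V × V → ℝ, λ ∈ ℝ, be parametric nonnegative capacities such that λ ↦ c_λ(s, v) is nondecreasing for every v, λ ↦ c_λ(v, t) is nonincreasing for every v, and c_λ(u, v) is constant in λ whenever u ≠ s and v ≠ t. Let λ₁ ≤ λ₂, let S_{λ₁} be a minimum s,t-cut with respect to capacities c_{λ₁}, and let S_{λ₂} be a minimum s,t-cut with respect to capacities c_{λ₂}. Then S_{λ₁} ∩ S_{λ₂} is a minimum s,t-cut with respect to capacities c_{λ₁}. -/

import Mathlib

/-!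
The cut functions of `c_{λ₁}` and `c_{λ₂}` satisfy a joint submodular inequality
`c_{λ₁}⁺(S₁ ∩ S₂) + c_{λ₂}⁺(S₁ ∪ S₂) ≤ c_{λ₁}⁺(S₁) + c_{λ₂}⁺(S₂)`
(`cutVal_inter_add_cutVal_union_le`), checked edge by edge. The monotonicity assumptions enter
through two facts: an edge whose head is in `S₁` does not enter `t`, so its capacity does not
decrease from `λ₁` to `λ₂`; an edge whose tail is outside `S₂` does not leave `s`, so its capacity
does not increase. Since `S₁ ∪ S₂` is an `s,t`-cut, minimality of `S₂` gives
`c_{λ₂}⁺(S₂) ≤ c_{λ₂}⁺(S₁ ∪ S₂)`, hence `c_{λ₁}⁺(S₁ ∩ S₂) ≤ c_{λ₁}⁺(S₁)`.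
-/

/-- The cut value of a set `S` for capacities `c`: `c⁺(S) = Σ_{u ∈ S, v ∉ S} c u v`. -/
def cutVal {V : Type*} [Fintype V] [DecidableEq V] (c : V → V → ℝ) (S : Finset V) : ℝ :=
  ∑ u ∈ S, ∑ v ∈ Sᶜ, c u v

/-- `S` is a minimum `s,t`-cut for capacities `c`. -/
def IsMinCut {V : Type*} [Fintype V] [DecidableEq V] (s t : V) (c : V → V → ℝ)
    (S : Finset V) : Prop :=
  s ∈ S ∧ t ∉ S ∧ ∀ S' : Finset V, s ∈ S' → t ∉ S' → cutVal c S ≤ cutVal c S'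

theorem cutVal_eq_sum_ite {V : Type*} [Fintype V] [DecidableEq V] (c : V → V → ℝ)
    (S : Finset V) :
    cutVal c S = ∑ u, ∑ v, if u ∈ S ∧ v ∉ S then c u v else 0 := by
  have h : ∀ u, (∑ v, if u ∈ S ∧ v ∉ S then c u v else 0)
      = if u ∈ S then ∑ v ∈ Sᶜ, c u v else 0 := by
    intro u
    by_cases hu : u ∈ S
    · simp only [hu, true_and, if_true, ← Finset.sum_filter]
      congr 1
      ext v
      simp
    · simp [hu]
  simp [cutVal, h, Finset.sum_ite_mem]

/-- Submodularity of the cut function across two capacities `c` and `d`. The two sides charge the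
same edge to different capacities only for edges from `A ∩ B` to `A \ B`, where `hle` applies, and
for edges from `A \ B` to the complement of `A ∪ B`, where `hge` applies. -/
theorem cutVal_inter_add_cutVal_union_le {V : Type*} [Fintype V] [DecidableEq V]
    (c d : V → V → ℝ) (A B : Finset V) (hc : ∀ u v, 0 ≤ c u v) (hd : ∀ u v, 0 ≤ d u v)
    (hle : ∀ u v, u ∈ B → v ∈ A → c u v ≤ d u v)
    (hge : ∀ u v, u ∉ B → v ∉ A → d u v ≤ c u v) :
    cutVal c (A ∩ B) + cutVal d (A ∪ B) ≤ cutVal c A + cutVal d B := by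
  simp only [cutVal_eq_sum_ite, ← Finset.sum_add_distrib]
  refine Finset.sum_le_sum fun u _ => Finset.sum_le_sum fun v _ => ?_
  have h1 := hc u v
  have h2 := hd u v
  have h3 := hle u v
  have h4 := hge u v
  by_cases huA : u ∈ A <;> by_cases huB : u ∈ B <;> by_cases hvA : v ∈ A <;>
    by_cases hvB : v ∈ B <;> simp_all

/-- For parametric nonnegative capacities (nondecreasing on edges out of `s`,
nonincreasing on edges into `t`, constant otherwise), if `λ₁ ≤ λ₂`, `S_{λ₁}` is a
minimum `s,t`-cut for `c_{λ₁}` and `S_{λ₂}` one for `c_{λ₂}`, then `S_{λ₁} ∩ S_{λ₂}`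
is a minimum `s,t`-cut for `c_{λ₁}`. -/
theorem stmt12 {V : Type*} [DecidableEq V] [Fintype V]
    (s t : V) (hst : s ≠ t)
    (c : ℝ → V → V → ℝ)
    (hnn : ∀ (lam : ℝ) (u v : V), 0 ≤ c lam u v)
    (hmono : ∀ v : V, Monotone fun lam => c lam s v)
    (hanti : ∀ v : V, Antitone fun lam => c lam v t)
    (hconst : ∀ u v : V, u ≠ s → v ≠ t → ∀ lam lam' : ℝ, c lam u v = c lam' u v)
    (lam1 lam2 : ℝ) (h12 : lam1 ≤ lam2)
    (S1 S2 : Finset V)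
    (h1 : IsMinCut s t (c lam1) S1) (h2 : IsMinCut s t (c lam2) S2) :
    IsMinCut s t (c lam1) (S1 ∩ S2) := by
  obtain ⟨hs1, ht1, hmin1⟩ := h1
  obtain ⟨hs2, ht2, hmin2⟩ := h2
  have hsub := cutVal_inter_add_cutVal_union_le (c lam1) (c lam2) S1 S2 (hnn lam1) (hnn lam2)
    (by
      intro u v _ hv
      by_cases hus : u = s
      · subst hus
        exact hmono v h12
      · have hvt : v ≠ t := fun h => ht1 (h ▸ hv)
        exact (hconst u v hus hvt lam1 lam2).le)
    (by
      intro u v hu _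
      by_cases hvt : v = t
      · subst hvt
        exact hanti u h12
      · have hus : u ≠ s := fun h => hu (h ▸ hs2)
        exact (hconst u v hus hvt lam2 lam1).le)
  have hunion := hmin2 (S1 ∪ S2) (by simp [hs1]) (by simp [ht1, ht2])
  refine ⟨by simp [hs1, hs2], by simp [ht1], fun S' hs' ht' => ?_⟩
  linarith [hmin1 S' hs' ht']
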